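/- arXiv:2511.04261 — 6 statements merged into one kernel-verified Lean document; each statement's English description precedes it below -/
import Mathlib

section
/- Let σ > 0 and let λ_σ be the Laplace measure with scale σ on ℝ, i.e., the measure with density t ↦ (1/(2σ))·exp(−|t|/σ) with respect to Lebesgue measure. For real numbers a and b, let μ_a and μ_b denote the pushforwards of λ_σ under the translations x ↦ x + a and x ↦ x + b respectively. Then for every measurable set S ⊆ ℝ, μ_a(S) ≤ exp(|a − b|/σ) · μ_b(S). In particular, if |a − b| ≤ Δ and σ = Δ/ε with ε > 0, then μ_a(S) ≤ exp(ε) · μ_b(S), i.e., the one-dimensional Laplace mechanism with noise scale Δ/ε applied to a real statistic of sensitivity at most Δ satisfies ε-differential privacy. -/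
/-!
A translate of the Laplace measure by `c` has density `y ↦ (1/(2σ)) · exp(−|y − c|/σ)`
(`laplaceMeasure_map_add_apply`). By the triangle inequality `|y − b| ≤ |y − a| + |a − b|`, the
density of the translate by `a` is pointwise at most `exp(|a − b|/σ)` times that of the translate
by `b` (`laplace_density_le`); integrating over `S` gives the first bound. The second follows
because `|a − b|/σ ≤ Δ/σ = ε` when `σ = Δ/ε`.
-/

open MeasureTheory

/-- The Laplace measure with scale `σ` on `ℝ`: the measure with density
`t ↦ (1/(2σ)) · exp(−|t|/σ)` with respect to Lebesgue measure. -/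
noncomputable def laplaceMeasure (σ : ℝ) : Measure ℝ :=
  volume.withDensity (fun t => ENNReal.ofReal ((1 / (2 * σ)) * Real.exp (-|t| / σ)))

theorem laplaceMeasure_map_add_apply (σ c : ℝ) {S : Set ℝ} (hS : MeasurableSet S) :
    (laplaceMeasure σ).map (fun x => x + c) S =
      ∫⁻ y in S, ENNReal.ofReal ((1 / (2 * σ)) * Real.exp (-|y - c| / σ)) := by
  have hc : Measurable (fun x : ℝ => x + c) := measurable_id.add_const c
  rw [Measure.map_apply hc hS, laplaceMeasure, withDensity_apply _ (hc hS)]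
  have h := (measurePreserving_add_right (volume : Measure ℝ) c).setLIntegral_comp_preimage hS
    (f := fun y => ENNReal.ofReal ((1 / (2 * σ)) * Real.exp (-|y - c| / σ))) (by fun_prop)
  simpa using h

theorem laplace_density_le {σ : ℝ} (hσ : 0 < σ) (a b y : ℝ) :
    (1 / (2 * σ)) * Real.exp (-|y - a| / σ) ≤
      Real.exp (|a - b| / σ) * ((1 / (2 * σ)) * Real.exp (-|y - b| / σ)) := by
  rw [mul_left_comm, ← Real.exp_add, ← add_div]
  gcongr
  linarith [abs_sub_le y a b]

/-- For translations of the Laplace measure by `a` and `b`, every measurable set `S`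
satisfies `μ_a(S) ≤ exp(|a − b|/σ) · μ_b(S)`; in particular, if `|a − b| ≤ Δ` and
`σ = Δ/ε` with `ε > 0`, then `μ_a(S) ≤ exp(ε) · μ_b(S)`, i.e. the one-dimensional
Laplace mechanism with noise scale `Δ/ε` applied to a real statistic of sensitivity
at most `Δ` satisfies `ε`-differential privacy. -/
theorem stmt_1 (σ : ℝ) (hσ : 0 < σ) (a b : ℝ) :
    (∀ S : Set ℝ, MeasurableSet S →
      (laplaceMeasure σ).map (fun x => x + a) S ≤
        ENNReal.ofReal (Real.exp (|a - b| / σ)) * (laplaceMeasure σ).map (fun x => x + b) S) ∧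
    (∀ Δ ε : ℝ, 0 < ε → |a - b| ≤ Δ → σ = Δ / ε →
      ∀ S : Set ℝ, MeasurableSet S →
        (laplaceMeasure σ).map (fun x => x + a) S ≤
          ENNReal.ofReal (Real.exp ε) * (laplaceMeasure σ).map (fun x => x + b) S) := by
  have main : ∀ S : Set ℝ, MeasurableSet S →
      (laplaceMeasure σ).map (fun x => x + a) S ≤
        ENNReal.ofReal (Real.exp (|a - b| / σ)) *
          (laplaceMeasure σ).map (fun x => x + b) S := by
    intro S hS
    rw [laplaceMeasure_map_add_apply σ a hS, laplaceMeasure_map_add_apply σ b hS,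
      ← lintegral_const_mul' _ _ ENNReal.ofReal_ne_top]
    refine lintegral_mono fun y => ?_
    rw [← ENNReal.ofReal_mul (Real.exp_pos _).le]
    exact ENNReal.ofReal_le_ofReal (laplace_density_le hσ a b y)
  refine ⟨main, fun Δ ε hε hΔ hσΔ S hS => (main S hS).trans ?_⟩
  have hle : |a - b| / σ ≤ ε := by
    rw [div_le_iff₀ hσ, hσΔ, mul_div_cancel₀ _ hε.ne']
    exact hΔ
  gcongr
end

section
/- Let k ∈ ℕ, σ > 0, and let x, y : Fin k → ℝ satisfy ∑_{i} |x i − y i| ≤ Δ. Let λ_σ^k be the k-fold product of the Laplace measure with scale σ on ℝ, and let μ_x and μ_y be the pushforwards of λ_σ^k under the translations η ↦ x + η and η ↦ y + η respectively. Then for every measurable set S ⊆ (Fin k → ℝ), μ_x(S) ≤ exp(Δ/σ) · μ_y(S). In particular, taking σ = Δ/ε with ε > 0, the mechanism that adds independent Laplace(Δ/ε) noise to each coordinate of a vector-valued statistic whose L1-sensitivity is at most Δ satisfies ε-differential privacy. -/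
/-!
The `ℓ¹` bound reduces to one coordinate. Translating the Laplace measure by `a` gives the measure
with density `f (t - a)`, and the triangle inequality `|t - b| ≤ |t - a| + |a - b|` bounds the ratio
of the densities for `a` and `b` by `exp (|a - b| / σ)` (`map_laplaceMeasure_le`). Domination up to
a constant passes to product measures, the constants multiplying (`pi_le_prod_smul_pi`), because the
product outer measure is the largest one lying below the volume of bounding boxes. The product of
the constants is `exp (∑ i, |x i - y i| / σ) ≤ exp (Δ / σ)`.
-/

open MeasureTheory

instance laplaceMeasure.instSigmaFinite (σ : ℝ) : SigmaFinite (laplaceMeasure σ) := by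
  rw [laplaceMeasure]
  exact SigmaFinite.withDensity_ofReal _

lemma map_laplaceMeasure (σ a : ℝ) :
    (laplaceMeasure σ).map (fun t => a + t) =
      volume.withDensity
        (fun t => ENNReal.ofReal ((1 / (2 * σ)) * Real.exp (-|t - a| / σ))) := by
  ext s hs
  have hm : Measurable fun t : ℝ => a + t := by fun_prop
  rw [Measure.map_apply hm hs, laplaceMeasure, withDensity_apply _ (hm hs),
    withDensity_apply _ hs, ← lintegral_indicator (hm hs), ← lintegral_indicator hs,
    ← lintegral_add_left_eq_self (s.indicator _) a]
  congr 1
  ext t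
  simp only [Set.indicator, add_sub_cancel_left]
  rfl

lemma map_laplaceMeasure_le (σ : ℝ) (hσ : 0 < σ) (a b : ℝ) :
    (laplaceMeasure σ).map (fun t => a + t) ≤
      ENNReal.ofReal (Real.exp (|a - b| / σ)) • (laplaceMeasure σ).map (fun t => b + t) := by
  rw [map_laplaceMeasure, map_laplaceMeasure, ← withDensity_smul _ (by fun_prop)]
  refine withDensity_mono (Filter.Eventually.of_forall fun t => ?_)
  rw [Pi.smul_apply, smul_eq_mul, ← ENNReal.ofReal_mul (Real.exp_nonneg _)]
  refine ENNReal.ofReal_le_ofReal ?_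
  rw [mul_left_comm, ← Real.exp_add, ← add_div]
  have h : -|t - a| ≤ |a - b| + -|t - b| := by
    linarith [abs_sub_le t a b]
  gcongr

lemma pi_le_prod_smul_pi {ι : Type*} [Fintype ι] {α : ι → Type*} [∀ i, MeasurableSpace (α i)]
    (μ ν : ∀ i, Measure (α i)) (c : ι → ENNReal) (hc0 : ∀ i, c i ≠ 0) (hct : ∀ i, c i ≠ ⊤)
    (h : ∀ i, μ i ≤ c i • ν i) :
    Measure.pi μ ≤ (∏ i, c i) • Measure.pi ν := by
  have hC0 : ∏ i, c i ≠ 0 := Finset.prod_ne_zero_iff.2 fun i _ => hc0 i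
  have hCt : ∏ i, c i ≠ ⊤ := ENNReal.prod_ne_top fun i _ => hct i
  -- The constant sits on the left so that the maximality of the product outer measure of `ν`
  -- among outer measures below box volumes applies.
  have key : (∏ i, c i)⁻¹ • OuterMeasure.pi (fun i => (μ i).toOuterMeasure) ≤
      OuterMeasure.pi (fun i => (ν i).toOuterMeasure) := by
    refine OuterMeasure.le_pi.2 fun s hs => ?_
    rw [smul_apply, smul_eq_mul, mul_comm, ← div_eq_mul_inv]
    refine ENNReal.div_le_of_le_mul' ?_
    calc _ ≤ ∏ i, μ i (s i) := OuterMeasure.pi_pi_le _ s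
      _ ≤ ∏ i, c i * ν i (s i) := Finset.prod_le_prod' fun i _ => h i (s i)
      _ = _ := Finset.prod_mul_distrib
  refine Measure.le_iff.2 fun s hs => ?_
  have hk := key s
  rw [smul_apply, smul_eq_mul, mul_comm, ← div_eq_mul_inv,
    ENNReal.div_le_iff' hC0 hCt] at hk
  rw [Measure.smul_apply, smul_eq_mul, Measure.pi, Measure.pi, toMeasure_apply _ _ hs,
    toMeasure_apply _ _ hs]
  exact hk

lemma map_pi_laplaceMeasure (k : ℕ) (σ : ℝ) (x : Fin k → ℝ) :
    (Measure.pi fun _ : Fin k => laplaceMeasure σ).map (fun η => x + η) =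
      Measure.pi fun i => (laplaceMeasure σ).map (fun t => x i + t) := by
  have : ∀ i, SigmaFinite ((laplaceMeasure σ).map (fun t => x i + t)) := fun i =>
    (MeasurableEquiv.addLeft (x i)).sigmaFinite_map
  exact Measure.pi_map_pi (f := fun i t => x i + t) fun i => by fun_prop

/-- Multivariate Laplace mechanism: if `x, y : Fin k → ℝ` satisfy
`∑ i, |x i − y i| ≤ Δ`, then the pushforwards of the `k`-fold product of the
Laplace measure with scale `σ` under the translations `η ↦ x + η` and `η ↦ y + η`
satisfy `μ_x(S) ≤ exp(Δ/σ) · μ_y(S)` for every measurable set `S`. -/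
theorem stmt_2 (k : ℕ) (σ Δ : ℝ) (hσ : 0 < σ) (x y : Fin k → ℝ)
    (hxy : ∑ i, |x i - y i| ≤ Δ)
    (S : Set (Fin k → ℝ)) (hS : MeasurableSet S) :
    (Measure.pi fun _ : Fin k => laplaceMeasure σ).map (fun η => x + η) S ≤
      ENNReal.ofReal (Real.exp (Δ / σ)) *
        (Measure.pi fun _ : Fin k => laplaceMeasure σ).map (fun η => y + η) S := by
  rw [map_pi_laplaceMeasure, map_pi_laplaceMeasure]
  have h := pi_le_prod_smul_pi _ _ (fun i => ENNReal.ofReal (Real.exp (|x i - y i| / σ)))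
    (fun i => by simp [Real.exp_pos]) (fun i => ENNReal.ofReal_ne_top)
    (fun i => map_laplaceMeasure_le σ hσ (x i) (y i)) S
  refine h.trans ?_
  rw [Measure.smul_apply, smul_eq_mul,
    ← ENNReal.ofReal_prod_of_nonneg fun i _ => Real.exp_nonneg _, ← Real.exp_sum,
    ← Finset.sum_div]
  gcongr
end

section
/- (Parallel Composition) Let k ∈ ℕ and for each i ∈ Fin k let Ω_i be a measurable space with probability measures P_i and Q_i. Suppose there is an index j ∈ Fin k such that P_i = Q_i for all i ≠ j, and P_j(A) ≤ exp(ε) · Q_j(A) for every measurable set A ⊆ Ω_j. Then the product measures satisfy (⊗_i P_i)(S) ≤ exp(ε) · (⊗_i Q_i)(S) for every measurable set S of the product space ∏_i Ω_i. In other words, if differentially private mechanisms are applied independently to disjoint subsets of the data and a change of one record affects only one subset's mechanism output distribution (by a factor at most exp(ε)), then the joint mechanism satisfies ε-differential privacy. -/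
open MeasureTheory

/-! Splitting off the coordinate `j` identifies `⨂ P i` with `P j ⊗ R` and `⨂ Q i` with `Q j ⊗ R`,
where `R` is the common product of the remaining factors. Since `P j ≤ exp ε • Q j` as measures,
monotonicity of the binary product in its first factor gives the bound. -/

/-- Parallel composition: if `P i = Q i` for all `i ≠ j` and
`P j (A) ≤ exp(ε) · Q j (A)` for every measurable `A`, then the product
probability measures satisfy `(⊗ᵢ Pᵢ)(S) ≤ exp(ε) · (⊗ᵢ Qᵢ)(S)` for every
measurable set `S` of the product space. -/
theorem stmt_4 (k : ℕ) (Ω : Fin k → Type*) [∀ i, MeasurableSpace (Ω i)]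
    (P Q : ∀ i, Measure (Ω i))
    [∀ i, IsProbabilityMeasure (P i)] [∀ i, IsProbabilityMeasure (Q i)]
    (ε : ℝ) (j : Fin k)
    (hother : ∀ i, i ≠ j → P i = Q i)
    (hj : ∀ A : Set (Ω j), MeasurableSet A → P j A ≤ ENNReal.ofReal (Real.exp ε) * Q j A)
    (S : Set (∀ i, Ω i)) (hS : MeasurableSet S) :
    Measure.pi P S ≤ ENNReal.ofReal (Real.exp ε) * Measure.pi Q S := by
  cases k with
  | zero => exact j.elim0
  | succ n =>
    have hP := measurePreserving_piFinSuccAbove P j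
    have hQ := measurePreserving_piFinSuccAbove Q j
    have hrest : (fun i => P (j.succAbove i)) = fun i => Q (j.succAbove i) :=
      funext fun i => hother _ (Fin.succAbove_ne j i)
    have hle : P j ≤ ENNReal.ofReal (Real.exp ε) • Q j :=
      Measure.le_iff.2 fun A hA => by simpa using hj A hA
    rw [← hP.symm.measure_preimage hS.nullMeasurableSet,
      ← hQ.symm.measure_preimage hS.nullMeasurableSet, hrest, ← smul_eq_mul,
      ← Measure.smul_apply, ← Measure.prod_smul_left]
    exact Measure.prod_mono hle le_rfl _
end

section
/- (L1-sensitivity of pixelization) Let M = G_R·b and N = G_C·b, and let I₁, I₂ : Fin M × Fin N → ℝ be images with all values in [0,255] that differ at at most m positions. Then the pixelization vectors satisfy ∑_{(r,c) ∈ Fin G_R × Fin G_C} |μ_{r,c}(I₁) − μ_{r,c}(I₂)| ≤ 255·m/b². -/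
/-!
The grids are pairwise disjoint, so by the triangle inequality inside each grid the `L¹` distance
of the pixelizations is at most `1/b²` times the `L¹` distance of the images
(`sum_abs_gridMean_sub_le`). The latter is at most `255 · m`, since each of the at most `m`
differing positions contributes at most `255`.
-/

/-- The `b×b` grid with index `(r,c)`: the positions `(i,j)` with
`r·b ≤ i < (r+1)·b` and `c·b ≤ j < (c+1)·b`. -/
def grid (G_R G_C b : ℕ) (rc : Fin G_R × Fin G_C) :
    Finset (Fin (G_R * b) × Fin (G_C * b)) :=
  Finset.univ.filter (fun p =>
    rc.1.val * b ≤ p.1.val ∧ p.1.val < (rc.1.val + 1) * b ∧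
    rc.2.val * b ≤ p.2.val ∧ p.2.val < (rc.2.val + 1) * b)

/-- The grid mean `μ_{r,c}(I) = (1/b²) · ∑_{(i,j) ∈ G_{r,c}} I(i,j)`. -/
noncomputable def gridMean (G_R G_C b : ℕ) (I : Fin (G_R * b) × Fin (G_C * b) → ℝ)
    (rc : Fin G_R × Fin G_C) : ℝ :=
  (1 / (b : ℝ) ^ 2) * ∑ p ∈ grid G_R G_C b rc, I p

theorem grid_pairwiseDisjoint (G_R G_C b : ℕ) :
    Set.PairwiseDisjoint (Finset.univ : Finset (Fin G_R × Fin G_C)) (grid G_R G_C b) := by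
  -- A row index `i` with `r·b ≤ i < (r+1)·b` determines `r = i / b`; likewise for columns.
  have key : ∀ i r : ℕ, r * b ≤ i → i < (r + 1) * b → i / b = r := fun i r h₁ h₂ =>
    Nat.div_eq_of_lt_le h₁ h₂
  intro x _ y _ hxy
  refine Finset.disjoint_left.2 fun p hx hy => hxy ?_
  simp only [grid, Finset.mem_filter, Finset.mem_univ, true_and] at hx hy
  obtain ⟨a₁, a₂, a₃, a₄⟩ := hx
  obtain ⟨b₁, b₂, b₃, b₄⟩ := hy
  exact Prod.ext (Fin.ext ((key _ _ a₁ a₂).symm.trans (key _ _ b₁ b₂)))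
    (Fin.ext ((key _ _ a₃ a₄).symm.trans (key _ _ b₃ b₄)))

/-- Pixelization contracts the `L¹` distance by the factor `1/b²`. -/
theorem sum_abs_gridMean_sub_le (G_R G_C b : ℕ) (I₁ I₂ : Fin (G_R * b) × Fin (G_C * b) → ℝ) :
    ∑ rc : Fin G_R × Fin G_C, |gridMean G_R G_C b I₁ rc - gridMean G_R G_C b I₂ rc|
      ≤ (1 / (b : ℝ) ^ 2) * ∑ q, |I₁ q - I₂ q| := by
  have hb : (0 : ℝ) ≤ 1 / (b : ℝ) ^ 2 := by positivity
  calc ∑ rc : Fin G_R × Fin G_C, |gridMean G_R G_C b I₁ rc - gridMean G_R G_C b I₂ rc|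
      ≤ ∑ rc : Fin G_R × Fin G_C,
          (1 / (b : ℝ) ^ 2) * ∑ q ∈ grid G_R G_C b rc, |I₁ q - I₂ q| := by
        refine Finset.sum_le_sum fun rc _ => ?_
        rw [gridMean, gridMean, ← mul_sub, ← Finset.sum_sub_distrib, abs_mul, abs_of_nonneg hb]
        exact mul_le_mul_of_nonneg_left (Finset.abs_sum_le_sum_abs _ _) hb
    _ = (1 / (b : ℝ) ^ 2) *
          ∑ q ∈ Finset.univ.biUnion (grid G_R G_C b), |I₁ q - I₂ q| := by
        rw [← Finset.mul_sum, Finset.sum_biUnion (grid_pairwiseDisjoint G_R G_C b)]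
    _ ≤ (1 / (b : ℝ) ^ 2) * ∑ q, |I₁ q - I₂ q| :=
        mul_le_mul_of_nonneg_left (Finset.sum_le_sum_of_subset_of_nonneg
          (Finset.subset_univ _) fun _ _ _ => abs_nonneg _) hb

/-- L1-sensitivity of pixelization: if two images with values in `[0,255]`
differ at at most `m` positions, then
`∑_{(r,c)} |μ_{r,c}(I₁) − μ_{r,c}(I₂)| ≤ 255·m/b²`. -/
theorem stmt_9 (G_R G_C b m : ℕ) (hb : 0 < b)
    (I₁ I₂ : Fin (G_R * b) × Fin (G_C * b) → ℝ)
    (hI₁ : ∀ q, I₁ q ∈ Set.Icc (0 : ℝ) 255) (hI₂ : ∀ q, I₂ q ∈ Set.Icc (0 : ℝ) 255)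
    (hdiff : {q | I₁ q ≠ I₂ q}.ncard ≤ m) :
    ∑ rc : Fin G_R × Fin G_C,
        |gridMean G_R G_C b I₁ rc - gridMean G_R G_C b I₂ rc| ≤ 255 * m / (b : ℝ) ^ 2 := by
  classical
  have hsum : ∑ q, |I₁ q - I₂ q| ≤ 255 * m := by
    calc ∑ q, |I₁ q - I₂ q|
        ≤ ∑ q, if I₁ q ≠ I₂ q then (255 : ℝ) else 0 := by
          refine Finset.sum_le_sum fun q _ => ?_
          split_ifs with h
          · have h₁ := hI₁ q
            have h₂ := hI₂ q
            exact abs_le.2 ⟨by linarith [h₁.1, h₂.2], by linarith [h₁.2, h₂.1]⟩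
          · simp [not_not.1 h]
      _ = 255 * ({q | I₁ q ≠ I₂ q}.ncard : ℝ) := by
          rw [← Finset.sum_filter, Finset.sum_const, nsmul_eq_mul, mul_comm,
            ← Set.ncard_coe_finset]
          simp
      _ ≤ 255 * m := by gcongr
  refine (sum_abs_gridMean_sub_le G_R G_C b I₁ I₂).trans ?_
  rw [one_div_mul_eq_div]
  gcongr
end

section
/- (Tightness of the sensitivity bound) Let M = G_R·b and N = G_C·b with G_R, G_C ≥ 1, and let m ≤ b². Then there exist images I₁, I₂ : Fin M × Fin N → ℝ with all values in [0,255] that differ at exactly m positions and satisfy ∑_{(r,c)} |μ_{r,c}(I₁) − μ_{r,c}(I₂)| = 255·m/b². Hence the global L1-sensitivity of the pixelization map over m-neighboring images equals 255·m/b² when m ≤ b². -/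
/-- Only the lower bound is needed: it lets any `m ≤ b²` positions be chosen in the first grid. -/
lemma sq_le_card_grid_zero (G_R G_C b : ℕ) (hR : 0 < G_R) (hC : 0 < G_C) :
    b ^ 2 ≤ (grid G_R G_C b (⟨0, hR⟩, ⟨0, hC⟩)).card := by
  have hRb : b ≤ G_R * b := Nat.le_mul_of_pos_left b hR
  have hCb : b ≤ G_C * b := Nat.le_mul_of_pos_left b hC
  have h := Finset.card_le_card_of_injOn (s := (Finset.univ : Finset (Fin b × Fin b)))
    (t := grid G_R G_C b (⟨0, hR⟩, ⟨0, hC⟩))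
    (fun p => (Fin.castLE hRb p.1, Fin.castLE hCb p.2))
    (by intro p _; simp [grid])
    (by
      rintro ⟨p₁, p₂⟩ _ ⟨q₁, q₂⟩ _ h
      simpa using h)
  simpa [sq] using h

/-- Grids with different indices are disjoint, stated for the first grid. -/
lemma eq_zero_of_mem_grid {G_R G_C b : ℕ} {hR : 0 < G_R} {hC : 0 < G_C}
    {rc : Fin G_R × Fin G_C} {p : Fin (G_R * b) × Fin (G_C * b)}
    (h0 : p ∈ grid G_R G_C b (⟨0, hR⟩, ⟨0, hC⟩)) (h : p ∈ grid G_R G_C b rc) :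
    rc = (⟨0, hR⟩, ⟨0, hC⟩) := by
  simp only [grid, Finset.mem_filter, Finset.mem_univ, true_and, zero_add, one_mul] at h0 h
  have key : ∀ r x : ℕ, r * b ≤ x → x < b → r = 0 := by
    intro r x h₁ h₂
    by_contra hr
    have := Nat.le_mul_of_pos_left b (Nat.pos_of_ne_zero hr)
    omega
  exact Prod.ext (Fin.ext (key _ _ h.1 h0.2.1)) (Fin.ext (key _ _ h.2.2.1 h0.2.2.2))

/-- Tightness of the sensitivity bound: for `G_R, G_C ≥ 1` and `m ≤ b²` there
exist images with values in `[0,255]` differing at exactly `m` positions whose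
pixelization vectors are at L1 distance exactly `255·m/b²`. -/
theorem stmt_10 (G_R G_C b m : ℕ) (hR : 1 ≤ G_R) (hC : 1 ≤ G_C) (hb : 0 < b)
    (hm : m ≤ b ^ 2) :
    ∃ I₁ I₂ : Fin (G_R * b) × Fin (G_C * b) → ℝ,
      (∀ q, I₁ q ∈ Set.Icc (0 : ℝ) 255) ∧ (∀ q, I₂ q ∈ Set.Icc (0 : ℝ) 255) ∧
      {q | I₁ q ≠ I₂ q}.ncard = m ∧
      ∑ rc : Fin G_R × Fin G_C,
          |gridMean G_R G_C b I₁ rc - gridMean G_R G_C b I₂ rc| = 255 * m / (b : ℝ) ^ 2 := by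
  obtain ⟨S, hS, hcard⟩ :=
    Finset.exists_subset_card_eq (hm.trans (sq_le_card_grid_zero G_R G_C b hR hC))
  refine ⟨fun q => if q ∈ S then 255 else 0, fun _ => 0, ?_, ?_, ?_, ?_⟩
  · intro q
    dsimp only
    split_ifs <;> norm_num
  · intro q
    norm_num
  · have : {q | (if q ∈ S then (255 : ℝ) else 0) ≠ 0} = (S : Set _) := by
      ext q
      simp
    rw [this, Set.ncard_coe_finset, hcard]
  · rw [Finset.sum_eq_single (⟨0, hR⟩, ⟨0, hC⟩)]
    · have hfilter : (grid G_R G_C b (⟨0, hR⟩, ⟨0, hC⟩)).filter (· ∈ S) = S := by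
        ext q
        simpa using fun hq => hS hq
      simp only [gridMean, Finset.sum_const_zero, mul_zero, sub_zero]
      rw [← Finset.sum_filter, hfilter, Finset.sum_const, hcard, nsmul_eq_mul,
        abs_of_nonneg (by positivity)]
      ring
    · intro rc _ hrc
      have hzero : ∑ p ∈ grid G_R G_C b rc, (if p ∈ S then (255 : ℝ) else 0) = 0 :=
        Finset.sum_eq_zero fun p hp =>
          if_neg fun hpS => hrc (eq_zero_of_mem_grid (hS hpS) hp)
      simp [gridMean, hzero]
    · simp
end

section
/- (Weighted sensitivity of region-adaptive pixelization) Let M = G_R·b, N = G_C·b, b = n·s_b with n ≥ 1, and let the grid index set Fin G_R × Fin G_C be partitioned into a set 𝒮 of simple grids and a set 𝒞 of complex grids; each complex grid (r,c) ∈ 𝒞 is subdivided into n² disjoint subgrids of size s_b×s_b with subgrid means ν_{r,c,u,v}(I) for (u,v) ∈ Fin n × Fin n. If I₁, I₂ : Fin M × Fin N → ℝ have all values in [0,255] and differ at at most m positions, then ∑_{(r,c)∈𝒮} (b²/255)·|μ_{r,c}(I₁) − μ_{r,c}(I₂)| + ∑_{(r,c)∈𝒞} ∑_{(u,v)} (s_b²/255)·|ν_{r,c,u,v}(I₁)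 − ν_{r,c,u,v}(I₂)| ≤ m. -/
/-- With `b = n·s_b`, the `s_b×s_b` subgrid of the grid `(r,c)` indexed by
`(u,v) ∈ Fin n × Fin n`: the positions `(r·b + u·s_b + p, c·b + v·s_b + q)`
for `(p,q) ∈ Fin s_b × Fin s_b`. -/
def subgrid (G_R G_C n s_b : ℕ) (rc : Fin G_R × Fin G_C) (uv : Fin n × Fin n) :
    Finset (Fin (G_R * (n * s_b)) × Fin (G_C * (n * s_b))) :=
  Finset.univ.filter (fun p =>
    rc.1.val * (n * s_b) + uv.1.val * s_b ≤ p.1.val ∧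
    p.1.val < rc.1.val * (n * s_b) + (uv.1.val + 1) * s_b ∧
    rc.2.val * (n * s_b) + uv.2.val * s_b ≤ p.2.val ∧
    p.2.val < rc.2.val * (n * s_b) + (uv.2.val + 1) * s_b)

/-- The subgrid mean `ν_{r,c,u,v}(I) = (1/s_b²) · ∑` of `I` over the subgrid. -/
noncomputable def subgridMean (G_R G_C n s_b : ℕ)
    (I : Fin (G_R * (n * s_b)) × Fin (G_C * (n * s_b)) → ℝ)
    (rc : Fin G_R × Fin G_C) (uv : Fin n × Fin n) : ℝ :=
  (1 / (s_b : ℝ) ^ 2) * ∑ p ∈ subgrid G_R G_C n s_b rc uv, I p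

/-- Consecutive intervals of length `b` starting at `o` are disjoint: a point lies in only one. -/
lemma block_index_unique {o b x u v : ℕ} (hu : o + u * b ≤ x) (hu' : x < o + (u + 1) * b)
    (hv : o + v * b ≤ x) (hv' : x < o + (v + 1) * b) : u = v := by
  have h1 : u < v + 1 := Nat.lt_of_mul_lt_mul_right (a := b) (by omega)
  have h2 : v < u + 1 := Nat.lt_of_mul_lt_mul_right (a := b) (by omega)
  omega

lemma grid_disjoint (G_R G_C b : ℕ) {rc rc' : Fin G_R × Fin G_C} (h : rc ≠ rc') :
    Disjoint (grid G_R G_C b rc) (grid G_R G_C b rc') := by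
  rw [Finset.disjoint_left]
  intro p hp hp'
  simp only [grid, Finset.mem_filter, Finset.mem_univ, true_and] at hp hp'
  obtain ⟨a1, a2, a3, a4⟩ := hp
  obtain ⟨b1, b2, b3, b4⟩ := hp'
  refine h (Prod.ext (Fin.ext ?_) (Fin.ext ?_))
  · exact block_index_unique (o := 0) (b := b) (x := p.1) (by omega) (by omega) (by omega) (by omega)
  · exact block_index_unique (o := 0) (b := b) (x := p.2) (by omega) (by omega) (by omega) (by omega)

lemma subgrid_disjoint (G_R G_C n s_b : ℕ) (rc : Fin G_R × Fin G_C) {uv uv' : Fin n × Fin n}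
    (h : uv ≠ uv') :
    Disjoint (subgrid G_R G_C n s_b rc uv) (subgrid G_R G_C n s_b rc uv') := by
  rw [Finset.disjoint_left]
  intro p hp hp'
  simp only [subgrid, Finset.mem_filter, Finset.mem_univ, true_and] at hp hp'
  obtain ⟨a1, a2, a3, a4⟩ := hp
  obtain ⟨b1, b2, b3, b4⟩ := hp'
  exact h (Prod.ext (Fin.ext (block_index_unique a1 a2 b1 b2))
    (Fin.ext (block_index_unique a3 a4 b3 b4)))

lemma subgrid_subset_grid (G_R G_C n s_b : ℕ) (rc : Fin G_R × Fin G_C) (uv : Fin n × Fin n) :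
    subgrid G_R G_C n s_b rc uv ⊆ grid G_R G_C (n * s_b) rc := by
  intro p hp
  simp only [subgrid, grid, Finset.mem_filter, Finset.mem_univ, true_and] at hp ⊢
  obtain ⟨a1, a2, a3, a4⟩ := hp
  have h1 : (uv.1.val + 1) * s_b ≤ n * s_b := Nat.mul_le_mul_right _ uv.1.isLt
  have h2 : (uv.2.val + 1) * s_b ≤ n * s_b := Nat.mul_le_mul_right _ uv.2.isLt
  rw [Nat.add_mul rc.1.val, Nat.add_mul rc.2.val, Nat.one_mul]
  omega

/-- The weight `w` of a cell cancels the normalisation of its mean; the triangle inequality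
does the rest. -/
lemma weight_mul_abs_sub_le {α : Type*} (s : Finset α) (f g : α → ℝ) {w : ℝ} (hw : 0 < w) :
    w / 255 * |1 / w * ∑ p ∈ s, f p - 1 / w * ∑ p ∈ s, g p| ≤ ∑ p ∈ s, |f p - g p| / 255 := by
  rw [← mul_sub, ← Finset.sum_sub_distrib, abs_mul, abs_of_pos (one_div_pos.mpr hw),
    ← Finset.sum_div]
  calc w / 255 * (1 / w * |∑ p ∈ s, (f p - g p)|) = |∑ p ∈ s, (f p - g p)| / 255 := by
        field_simp
    _ ≤ _ := by
        gcongr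
        exact Finset.abs_sum_le_sum_abs _ _

/-- Weighted sensitivity of region-adaptive pixelization: with the grid index
set partitioned into simple grids `𝒮` and complex grids `𝒞` (each complex grid
subdivided into `n²` subgrids of size `s_b×s_b`), two `[0,255]`-valued images
differing at at most `m` positions satisfy
`∑_{𝒮} (b²/255)·|Δμ| + ∑_{𝒞} ∑_{(u,v)} (s_b²/255)·|Δν| ≤ m`. -/
theorem stmt_14 (G_R G_C n s_b m : ℕ) (hn : 1 ≤ n) (hs : 0 < s_b)
    (simple complex : Finset (Fin G_R × Fin G_C))
    (hpart : ∀ rc, rc ∈ simple ↔ rc ∉ complex)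
    (I₁ I₂ : Fin (G_R * (n * s_b)) × Fin (G_C * (n * s_b)) → ℝ)
    (hI₁ : ∀ q, I₁ q ∈ Set.Icc (0 : ℝ) 255) (hI₂ : ∀ q, I₂ q ∈ Set.Icc (0 : ℝ) 255)
    (hdiff : {q | I₁ q ≠ I₂ q}.ncard ≤ m) :
    ∑ rc ∈ simple, (((n : ℝ) * s_b) ^ 2 / 255) *
        |gridMean G_R G_C (n * s_b) I₁ rc - gridMean G_R G_C (n * s_b) I₂ rc| +
      ∑ rc ∈ complex, ∑ uv : Fin n × Fin n, ((s_b : ℝ) ^ 2 / 255) *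
        |subgridMean G_R G_C n s_b I₁ rc uv - subgridMean G_R G_C n s_b I₂ rc uv| ≤ (m : ℝ) := by
  classical
  have hs' : (0 : ℝ) < s_b := by exact_mod_cast hs
  have hn' : (0 : ℝ) < n := by exact_mod_cast hn
  set d : Fin (G_R * (n * s_b)) × Fin (G_C * (n * s_b)) → ℝ := fun p => |I₁ p - I₂ p| / 255
    with hd
  have hd0 : ∀ p, 0 ≤ d p := fun p => by positivity
  have hsimple : ∀ rc, (((n : ℝ) * s_b) ^ 2 / 255) *
      |gridMean G_R G_C (n * s_b) I₁ rc - gridMean G_R G_C (n * s_b) I₂ rc| ≤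
      ∑ p ∈ grid G_R G_C (n * s_b) rc, d p := by
    intro rc
    simp only [gridMean, Nat.cast_mul]
    exact weight_mul_abs_sub_le _ _ _ (by positivity)
  have hcomplex : ∀ rc, ∑ uv : Fin n × Fin n, ((s_b : ℝ) ^ 2 / 255) *
      |subgridMean G_R G_C n s_b I₁ rc uv - subgridMean G_R G_C n s_b I₂ rc uv| ≤
      ∑ p ∈ grid G_R G_C (n * s_b) rc, d p := by
    intro rc
    calc _ ≤ ∑ uv : Fin n × Fin n, ∑ p ∈ subgrid G_R G_C n s_b rc uv, d p :=
          Finset.sum_le_sum fun uv _ => weight_mul_abs_sub_le _ _ _ (by positivity)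
      _ = ∑ p ∈ Finset.univ.biUnion (subgrid G_R G_C n s_b rc), d p :=
          (Finset.sum_biUnion fun _ _ _ _ h => subgrid_disjoint G_R G_C n s_b rc h).symm
      _ ≤ _ := Finset.sum_le_sum_of_subset_of_nonneg
          (Finset.biUnion_subset.mpr fun uv _ => subgrid_subset_grid G_R G_C n s_b rc uv)
          fun p _ _ => hd0 p
  have hdisj : Disjoint simple complex :=
    Finset.disjoint_left.mpr fun rc h => (hpart rc).mp h
  have hd1 : ∀ p, d p ≤ if I₁ p ≠ I₂ p then 1 else 0 := by
    intro p
    obtain ⟨a1, a2⟩ := hI₁ p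
    obtain ⟨b1, b2⟩ := hI₂ p
    split_ifs with h
    · rw [hd, div_le_one (by norm_num), abs_le]
      constructor <;> linarith
    · simp [hd, not_not.mp h]
  calc _ ≤ ∑ rc ∈ simple, ∑ p ∈ grid G_R G_C (n * s_b) rc, d p +
        ∑ rc ∈ complex, ∑ p ∈ grid G_R G_C (n * s_b) rc, d p :=
        add_le_add (Finset.sum_le_sum fun rc _ => hsimple rc)
          (Finset.sum_le_sum fun rc _ => hcomplex rc)
    _ = ∑ p ∈ (simple ∪ complex).biUnion (grid G_R G_C (n * s_b)), d p := by
        rw [← Finset.sum_union hdisj]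
        exact (Finset.sum_biUnion fun _ _ _ _ h => grid_disjoint G_R G_C _ h).symm
    _ ≤ ∑ p, d p :=
        Finset.sum_le_sum_of_subset_of_nonneg (Finset.subset_univ _) fun p _ _ => hd0 p
    _ ≤ ∑ p, if I₁ p ≠ I₂ p then (1 : ℝ) else 0 := Finset.sum_le_sum fun p _ => hd1 p
    _ = ({q | I₁ q ≠ I₂ q}.ncard : ℝ) := by
        rw [Finset.sum_boole, Set.ncard_eq_toFinset_card', Set.toFinset_ofPred]
    _ ≤ m := by exact_mod_cast hdiff
end
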